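/- arXiv:2509.04375 — 7 statements merged into one kernel-verified Lean document; each statement's English description precedes it below -/
import Mathlib

section
/- Let α > 0 and let κ satisfy κ ∈ (0, α) if α ≤ 1 and κ ∈ (0, 1] if α > 1. Define Q_{α,κ} : (0,1] → ℝ by Q_{α,κ}(λ) = (θ_α(λ) − κ) / ((1 − λ/(2−κ))·(κ/2)), where θ_α(λ) = (1 − (1−λ)^α)/λ, with the continuous extension Q_{α,1}(1) := 2 when κ = 1. Then Q_{α,κ} is strictly increasing on (0,1] for α ∈ (0,2) and strictly decreasing on (0,1] for α > 2. Moreover, the infimum of Q_{α,κ} over (0,1] equals 2(α−κ)/κ when α ∈ (0,2) and equals 2(2−κ)/κ when α ≥ 2. -/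
/-- θ_α(λ) = (1 − (1−λ)^α)/λ, with `(1−λ)^α` the real power. -/
noncomputable def theta (α : ℝ) : ℝ → ℝ := fun l => (1 - (1 - l) ^ α) / l

/-- Q_{α,κ}(λ) = (θ_α(λ) − κ)/((1 − λ/(2−κ))·(κ/2)), continuously extended by
`Q_{α,1}(1) := 2` when `κ = 1`. -/
noncomputable def Qfun (α κ : ℝ) : ℝ → ℝ := fun l =>
  if κ = 1 ∧ l = 1 then 2 else (theta α l - κ) / ((1 - l / (2 - κ)) * (κ / 2))

theorem theta_mono_aux {β : ℝ} (h0 : 0 < β) (h1 : β < 1) :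
    StrictMonoOn (theta β) (Set.Ioc 0 1) := by
  intro a ha b hb hab
  obtain ⟨ha0, ha1⟩ := ha
  obtain ⟨hb0, hb1⟩ := hb
  have h := (Real.strictConcaveOn_rpow h0 h1).secant_strict_mono (a := 1) (x := 1 - b) (y := 1 - a)
    (by simp) (by simp; linarith) (by simp; linarith) (by linarith) (by linarith) (by linarith)
  simp only [Real.one_rpow] at h
  have e : ∀ l : ℝ, ((1 - l) ^ β - 1) / (1 - l - 1) = theta β l := by
    intro l
    rw [theta, show (1 - l - 1) = -l by ring, ← neg_sub, neg_div_neg_eq]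
  rwa [e, e] at h

theorem theta_anti_aux {β : ℝ} (h1 : 1 < β) :
    StrictAntiOn (theta β) (Set.Ioc 0 1) := by
  intro a ha b hb hab
  obtain ⟨ha0, ha1⟩ := ha
  obtain ⟨hb0, hb1⟩ := hb
  have h := (strictConvexOn_rpow h1).secant_strict_mono (a := 1) (x := 1 - b) (y := 1 - a)
    (by simp) (by simp; linarith) (by simp; linarith) (by linarith) (by linarith) (by linarith)
  simp only [Real.one_rpow] at h
  have e : ∀ l : ℝ, ((1 - l) ^ β - 1) / (1 - l - 1) = theta β l := by
    intro l
    rw [theta, show (1 - l - 1) = -l by ring, ← neg_sub, neg_div_neg_eq]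
  rwa [e, e] at h

theorem theta_one_aux {β : ℝ} (h0 : 0 < β) : theta β 1 = 1 := by
  simp [theta, Real.zero_rpow h0.ne']

theorem theta_lim_aux (α : ℝ) :
    Filter.Tendsto (theta α) (nhdsWithin 0 (Set.Ioi 0)) (nhds α) := by
  have hd : HasDerivAt (fun l : ℝ => 1 - (1 - l) ^ α) α 0 := by
    have h1 : HasDerivAt (fun l : ℝ => 1 - l) (-1) 0 := by
      simpa using (hasDerivAt_id (0:ℝ)).const_sub 1
    have h2 := (h1.rpow_const (p := α) (Or.inl (by norm_num))).const_sub 1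
    simpa using h2
  have h := hd.tendsto_slope.mono_left
    (nhdsWithin_mono 0 (fun x (hx : x ∈ Set.Ioi (0:ℝ)) => (ne_of_gt hx : x ≠ 0)))
  refine h.congr' ?_
  filter_upwards with x
  simp [slope_def_field, theta]

theorem Qfun_form_aux {α κ l : ℝ} (hα : 1 < α) (hκ : 0 < κ) (hκ1 : κ ≤ 1)
    (hl : 0 < l) (hl1 : l ≤ 1) :
    Qfun α κ l = 2 * (2 - κ) / κ *
      (1 - (1 - l) / (1 - κ + (1 - l)) * (1 - theta (α - 1) l)) := by
  have hth : theta α l = 1 + (1 - l) * theta (α - 1) l := by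
    unfold theta
    have : (1 - l) ^ α = (1 - l) * (1 - l) ^ (α - 1) := by
      rcases hl1.eq_or_lt with rfl | h
      · simp [Real.zero_rpow (by linarith : α ≠ 0)]
      · rw [Real.rpow_sub_one (by linarith)]
        field_simp [(by linarith : (1 - l) ≠ 0)]
    rw [this]
    field_simp
    ring
  unfold Qfun
  split_ifs with h
  · obtain ⟨rfl, rfl⟩ := h
    norm_num
  · have hne : 0 < 1 - κ + (1 - l) := by
      rcases hκ1.eq_or_lt with rfl | h1
      · have : l ≠ 1 := fun h' => h ⟨rfl, h'⟩
        have := lt_of_le_of_ne hl1 this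
        linarith
      · linarith
    have h2 : 0 < 2 - κ := by linarith
    have h3 : 1 - l / (2 - κ) = (1 - κ + (1 - l)) / (2 - κ) := by
      field_simp; ring
    rw [h3, hth]
    field_simp
    ring

theorem w_aux {κ a b : ℝ} (hκ1 : κ ≤ 1) (hb1 : b ≤ 1) (hab : a < b) :
    (1 - b) / (1 - κ + (1 - b)) ≤ (1 - a) / (1 - κ + (1 - a)) ∧
      0 < (1 - a) / (1 - κ + (1 - a)) := by
  have hp : 0 < (1 - a) / (1 - κ + (1 - a)) := div_pos (by linarith) (by linarith)
  refine ⟨?_, hp⟩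
  rcases hb1.eq_or_lt with rfl | h
  · simpa using hp.le
  · rw [div_le_div_iff₀ (by linarith) (by linarith)]
    nlinarith

theorem Qfun_mono_aux {α κ : ℝ} (hα : 0 < α)
    (hκ1 : α ≤ 1 → 0 < κ ∧ κ < α) (hκ2 : 1 < α → 0 < κ ∧ κ ≤ 1) (h2 : α < 2) :
    StrictMonoOn (Qfun α κ) (Set.Ioc 0 1) := by
  intro a ha b hb hab
  rcases le_or_gt α 1 with h1 | h1
  · obtain ⟨hκ, hκα⟩ := hκ1 h1
    have hm : theta α a ≤ theta α b := by
      rcases h1.eq_or_lt with rfl | h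
      · simp [theta, ha.1.ne', hb.1.ne']
      · exact (theta_mono_aux hα h ha hb hab).le
    have hbd : α ≤ theta α a := by
      unfold theta
      rw [le_div_iff₀ ha.1]
      have := rpow_one_add_le_one_add_mul_self (s := -a) (by linarith [ha.2]) hα.le h1
      rw [← sub_eq_add_neg] at this
      linarith
    have hk : κ ≠ 1 := by linarith
    have h2k : 0 < 2 - κ := by linarith
    have hb2 : 0 < 1 - b / (2 - κ) := by
      rw [sub_pos, div_lt_one h2k]; linarith [hb.2]
    have hlt : a / (2 - κ) < b / (2 - κ) := div_lt_div_of_pos_right hab h2k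
    simp only [Qfun, hk, false_and, if_false]
    apply div_lt_div₀' (by linarith) _ (by linarith) (by positivity)
    exact mul_lt_mul_of_pos_right (by linarith) (by linarith)
  · obtain ⟨hκ, hκ1⟩ := hκ2 h1
    rw [Qfun_form_aux h1 hκ hκ1 ha.1 ha.2, Qfun_form_aux h1 hκ hκ1 hb.1 hb.2]
    have hm := theta_mono_aux (β := α - 1) (by linarith) (by linarith)
    have hu := hm ha hb hab
    have hu2 := hm.monotoneOn hb (Set.right_mem_Ioc.2 one_pos) hb.2
    rw [theta_one_aux (by linarith)] at hu2
    obtain ⟨w1, w2⟩ := w_aux hκ1 hb.2 hab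
    have hc : 0 < 2 * (2 - κ) / κ := div_pos (by linarith) hκ
    apply mul_lt_mul_of_pos_left _ hc
    nlinarith

theorem Qfun_anti_aux {α κ : ℝ} (hκ : 0 < κ) (hκ1 : κ ≤ 1) (h2 : 2 < α) :
    StrictAntiOn (Qfun α κ) (Set.Ioc 0 1) := by
  intro a ha b hb hab
  have h1 : 1 < α := by linarith
  rw [Qfun_form_aux h1 hκ hκ1 ha.1 ha.2, Qfun_form_aux h1 hκ hκ1 hb.1 hb.2]
  have hm := theta_anti_aux (β := α - 1) (by linarith)
  have hu := hm ha hb hab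
  have hu2 := hm.antitoneOn hb (Set.right_mem_Ioc.2 one_pos) hb.2
  rw [theta_one_aux (by linarith)] at hu2
  obtain ⟨w1, w2⟩ := w_aux hκ1 hb.2 hab
  have hc : 0 < 2 * (2 - κ) / κ := div_pos (by linarith) hκ
  apply mul_lt_mul_of_pos_left _ hc
  nlinarith

theorem Qfun_lim_aux {α κ : ℝ} (hκ : 0 < κ) :
    Filter.Tendsto (Qfun α κ) (nhdsWithin 0 (Set.Ioi 0)) (nhds (2 * (α - κ) / κ)) := by
  have hid : Filter.Tendsto (fun l : ℝ => l) (nhdsWithin 0 (Set.Ioi 0)) (nhds 0) :=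
    Filter.tendsto_id.mono_left nhdsWithin_le_nhds
  have h := ((theta_lim_aux α).sub_const κ).div
    (((hid.div_const (2 - κ)).const_sub 1).mul_const (κ / 2)) (by simp [hκ.ne'])
  have e : (α - κ) / ((1 - 0 / (2 - κ)) * (κ / 2)) = 2 * (α - κ) / κ := by
    rw [zero_div, sub_zero, one_mul]; field_simp
  rw [e] at h
  refine h.congr' ?_
  filter_upwards [Ioo_mem_nhdsGT (one_pos : (0:ℝ) < 1)] with x hx
  simp [Qfun, hx.2.ne]

theorem stmt_1 (α κ : ℝ) (hα : 0 < α)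
    (hκ1 : α ≤ 1 → 0 < κ ∧ κ < α) (hκ2 : 1 < α → 0 < κ ∧ κ ≤ 1) :
    (α < 2 → StrictMonoOn (Qfun α κ) (Set.Ioc 0 1)) ∧
    (2 < α → StrictAntiOn (Qfun α κ) (Set.Ioc 0 1)) ∧
    (α < 2 → sInf (Qfun α κ '' Set.Ioc 0 1) = 2 * (α - κ) / κ) ∧
    (2 ≤ α → sInf (Qfun α κ '' Set.Ioc 0 1) = 2 * (2 - κ) / κ) := by
  have hκ : 0 < κ := by
    rcases le_or_gt α 1 with h | h
    · exact (hκ1 h).1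
    · exact (hκ2 h).1
  refine ⟨Qfun_mono_aux hα hκ1 hκ2, fun h => Qfun_anti_aux hκ (hκ2 (by linarith)).2 h, ?_, ?_⟩
  · intro h2
    have hm := Qfun_mono_aux hα hκ1 hκ2 h2
    have hl := Qfun_lim_aux (α := α) hκ
    apply IsGLB.csInf_eq _ ⟨_, Set.mem_image_of_mem _ (Set.right_mem_Ioc.2 one_pos)⟩
    constructor
    · rintro _ ⟨x, hx, rfl⟩
      apply le_of_tendsto hl
      filter_upwards [Ioo_mem_nhdsGT hx.1] with y hy
      exact (hm ⟨hy.1, hy.2.le.trans hx.2⟩ hx hy.2).le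
    · intro c hc
      apply ge_of_tendsto hl
      filter_upwards [Ioo_mem_nhdsGT (one_pos : (0:ℝ) < 1)] with y hy
      exact hc ⟨y, ⟨hy.1, hy.2.le⟩, rfl⟩
  · intro h2
    have h1 : 1 < α := by linarith
    have hk1 := (hκ2 h1).2
    have hone : Qfun α κ 1 = 2 * (2 - κ) / κ := by
      rw [Qfun_form_aux h1 hκ hk1 one_pos le_rfl]; simp
    apply IsLeast.csInf_eq
    refine ⟨⟨1, Set.right_mem_Ioc.2 one_pos, hone⟩, ?_⟩
    rintro _ ⟨x, hx, rfl⟩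
    rcases h2.eq_or_lt with rfl | h
    · rw [Qfun_form_aux h1 hκ hk1 hx.1 hx.2]
      have : theta (2 - 1) x = 1 := by
        have := hx.1.ne'
        norm_num [theta, this]
      simp [this]
    · rw [← hone]
      exact (Qfun_anti_aux hκ hk1 h).antitoneOn hx (Set.right_mem_Ioc.2 one_pos) hx.2
end

section
/- Let K ⊆ ℝ^n be a nonempty closed convex set with 0 ∈ K, let 0 < α < 1, and let h : K → ℝ satisfy h(t·x) = t^α·h(x) for all x ∈ K and all t ∈ [0,1], with 0 ∈ argmin_K h. Then for every κ ∈ (0, α], h is κ-quasar-convex on K with respect to x̄ = 0. -/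
open Set

/-- `h` is κ-quasar-convex on the convex set `K` with respect to `x̄`:
`h(λx̄ + (1−λ)x) ≤ κλ h(x̄) + (1−κλ) h(x)` for all `λ ∈ [0,1]` and `x ∈ K`. -/
def QuasarConvexOn {n : ℕ} (K : Set (EuclideanSpace ℝ (Fin n)))
    (h : EuclideanSpace ℝ (Fin n) → ℝ) (κ : ℝ)
    (xbar : EuclideanSpace ℝ (Fin n)) : Prop :=
  ∀ x ∈ K, ∀ l ∈ Icc (0:ℝ) 1,
    h (l • xbar + (1 - l) • x) ≤ κ * l * h xbar + (1 - κ * l) * h x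

theorem stmt_4 {n : ℕ} (K : Set (EuclideanSpace ℝ (Fin n)))
    (hK : K.Nonempty) (hKcl : IsClosed K) (hKcv : Convex ℝ K)
    (h0K : (0 : EuclideanSpace ℝ (Fin n)) ∈ K)
    (α : ℝ) (hα0 : 0 < α) (hα1 : α < 1) (h : EuclideanSpace ℝ (Fin n) → ℝ)
    (hhom : ∀ x ∈ K, ∀ t ∈ Icc (0:ℝ) 1, h (t • x) = t ^ α * h x)
    (hmin : ∀ x ∈ K, h 0 ≤ h x)
    (κ : ℝ) (hκ : κ ∈ Ioc (0:ℝ) α) :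
    QuasarConvexOn K h κ 0 := by
  intro x hx l hl
  have h0 : h 0 = 0 := by
    have := hhom 0 h0K 0 ⟨le_refl _, zero_le_one⟩
    rw [Real.zero_rpow hα0.ne'] at this
    simpa using this
  have hxn : 0 ≤ h x := h0 ▸ hmin x hx
  have hb : (1 - l) ^ α ≤ 1 - κ * l := by
    have := rpow_one_add_le_one_add_mul_self (s := -l) (by linarith [hl.2]) hα0.le hα1.le
    rw [← sub_eq_add_neg] at this
    nlinarith [mul_le_mul_of_nonneg_right hκ.2 hl.1]
  rw [smul_zero, zero_add, h0, mul_zero, zero_add,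
    hhom x hx (1 - l) ⟨by linarith [hl.2], by linarith [hl.1]⟩]
  exact mul_le_mul_of_nonneg_right hb hxn
end

section
/- Let K ⊆ ℝ^n be a nonempty closed convex set with 0 ∈ K, let α ≥ 1, and let h : K → ℝ satisfy h(t·x) = t^α·h(x) for all x ∈ K and all t ∈ [0,1], with 0 ∈ argmin_K h. Then for every κ ∈ (0, 1], h is κ-quasar-convex on K with respect to x̄ = 0. -/
open Set

theorem stmt_5 {n : ℕ} (K : Set (EuclideanSpace ℝ (Fin n)))
    (hK : K.Nonempty) (hKcl : IsClosed K) (hKcv : Convex ℝ K)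
    (h0K : (0 : EuclideanSpace ℝ (Fin n)) ∈ K)
    (α : ℝ) (hα : 1 ≤ α) (h : EuclideanSpace ℝ (Fin n) → ℝ)
    (hhom : ∀ x ∈ K, ∀ t ∈ Icc (0:ℝ) 1, h (t • x) = t ^ α * h x)
    (hmin : ∀ x ∈ K, h 0 ≤ h x)
    (κ : ℝ) (hκ : κ ∈ Ioc (0:ℝ) 1) :
    QuasarConvexOn K h κ 0 := by
  intro x hx l hl
  obtain ⟨hl0, hl1⟩ := hl
  obtain ⟨hk0, hk1⟩ := hκ
  have h0 : h 0 = 0 := by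
    have := hhom 0 h0K 0 ⟨le_refl _, zero_le_one⟩
    rw [Real.zero_rpow (by linarith), smul_zero, zero_mul] at this
    exact this
  have hx0 : 0 ≤ h x := h0 ▸ hmin x hx
  have hp : (1 - l) ^ α ≤ 1 - l :=
    Real.rpow_le_self_of_le_one (by linarith) (by linarith) hα
  rw [smul_zero, zero_add, hhom x hx (1 - l) ⟨by linarith, by linarith⟩, h0, mul_zero, zero_add]
  apply mul_le_mul_of_nonneg_right _ hx0
  nlinarith
end

section
/- Let 0 < p < 1 and define h_p : ℝ^n → ℝ by h_p(x) = (∑_{i=1}^n |x_i|^p)^{1/p}. Then: (i) for every κ ∈ (0, p], h_p is κ-quasar-convex on ℝ^n with respect to x̄ = 0; and (ii) for every κ ∈ (0, p), the restriction of h_p to the closed Euclidean unit ball is (κ, γ_p)-strongly quasar-convex with respect to x̄ = 0, where γ_p := 2(p − κ)/κ > 0. -/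
open Set

/-- `h` is (κ,γ)-strongly quasar-convex on the convex set `K` with respect to `x̄`;
for `γ = 0` this is κ-quasar-convexity. -/
def StronglyQuasarConvexOn {n : ℕ} (K : Set (EuclideanSpace ℝ (Fin n)))
    (h : EuclideanSpace ℝ (Fin n) → ℝ) (κ γ : ℝ)
    (xbar : EuclideanSpace ℝ (Fin n)) : Prop :=
  ∀ x ∈ K, ∀ l ∈ Icc (0:ℝ) 1,
    h (l • xbar + (1 - l) • x) ≤ κ * l * h xbar + (1 - κ * l) * h x
      - l * (1 - l / (2 - κ)) * (κ * γ / 2) * ‖x - xbar‖ ^ 2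

/-- The ℓ_p-quasinorm `h_p(x) = (∑ i, |x i|^p)^{1/p}` for `0 < p < 1`. -/
noncomputable def lpReg {n : ℕ} (p : ℝ) (x : EuclideanSpace ℝ (Fin n)) : ℝ :=
  (∑ i, |x i| ^ p) ^ (1 / p)

theorem aux_zero {n : ℕ} (p : ℝ) (hp0 : 0 < p) : lpReg p (0 : EuclideanSpace ℝ (Fin n)) = 0 := by
  have h : 1 / p ≠ 0 := by positivity
  simp [lpReg, Real.zero_rpow hp0.ne', hp0.ne']

theorem aux_nonneg {n : ℕ} (p : ℝ) (x : EuclideanSpace ℝ (Fin n)) : 0 ≤ lpReg p x := by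
  unfold lpReg
  positivity

theorem aux_smul {n : ℕ} (p : ℝ) (hp0 : 0 < p) (c : ℝ) (hc : 0 ≤ c)
    (x : EuclideanSpace ℝ (Fin n)) : lpReg p (c • x) = c * lpReg p x := by
  unfold lpReg
  have h : ∀ i, |(c • x) i| ^ p = c ^ p * |x i| ^ p := by
    intro i
    rw [PiLp.smul_apply, smul_eq_mul, abs_mul, abs_of_nonneg hc, Real.mul_rpow hc (abs_nonneg _)]
  simp_rw [h]
  rw [← Finset.mul_sum, Real.mul_rpow (by positivity) (by positivity), ← Real.rpow_mul hc,
    mul_one_div_cancel hp0.ne', Real.rpow_one]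

theorem aux_sum {n : ℕ} (p : ℝ) (hp0 : 0 < p) (hp1 : p < 1)
    (x : EuclideanSpace ℝ (Fin n)) : ∑ i, |x i| ≤ lpReg p x := by
  unfold lpReg
  set S := ∑ i, |x i| ^ p with hS
  have hS0 : 0 ≤ S := by positivity
  have h1 : ∀ i, |x i| ≤ S ^ (1 / p) := by
    intro i
    have : |x i| ^ p ≤ S :=
      Finset.single_le_sum (f := fun i => |x i| ^ p) (fun j _ => by positivity) (Finset.mem_univ i)
    have h2 := Real.rpow_le_rpow (by positivity) this (by positivity : 0 ≤ 1 / p)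
    rwa [← Real.rpow_mul (abs_nonneg _), mul_one_div_cancel hp0.ne', Real.rpow_one] at h2
  have e : ∀ a : ℝ, 0 ≤ a → a = a ^ p * a ^ (1 - p) := by
    intro a ha
    rw [← Real.rpow_add_of_nonneg ha hp0.le (by linarith)]
    simp
  calc ∑ i, |x i| ≤ ∑ i, |x i| ^ p * (S ^ (1 / p)) ^ (1 - p) := by
        apply Finset.sum_le_sum
        intro i _
        conv_lhs => rw [e _ (abs_nonneg (x i))]
        exact mul_le_mul_of_nonneg_left
          (Real.rpow_le_rpow (abs_nonneg _) (h1 i) (by linarith)) (by positivity)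
    _ = S * (S ^ (1 / p)) ^ (1 - p) := by rw [← Finset.sum_mul]
    _ = S ^ (1 / p) := by
        conv_rhs => rw [e (S ^ (1 / p)) (by positivity)]
        rw [← Real.rpow_mul hS0 (1 / p) p, one_div_mul_cancel hp0.ne', Real.rpow_one]

theorem aux_norm {n : ℕ} (p : ℝ) (hp0 : 0 < p) (hp1 : p < 1)
    (x : EuclideanSpace ℝ (Fin n)) (hx : ‖x‖ ≤ 1) : ‖x‖ ^ 2 ≤ lpReg p x := by
  refine le_trans ?_ (aux_sum p hp0 hp1 x)
  rw [EuclideanSpace.norm_sq_eq]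
  apply Finset.sum_le_sum
  intro i _
  have h := (PiLp.norm_apply_le x i).trans hx
  have h0 := norm_nonneg (x i)
  rw [← Real.norm_eq_abs]
  nlinarith

theorem stmt_10 {n : ℕ} (p : ℝ) (hp0 : 0 < p) (hp1 : p < 1) :
    (∀ κ ∈ Ioc (0:ℝ) p,
      StronglyQuasarConvexOn (univ : Set (EuclideanSpace ℝ (Fin n))) (lpReg p) κ 0 0) ∧
    (∀ κ ∈ Ioo (0:ℝ) p,
      StronglyQuasarConvexOn (Metric.closedBall (0 : EuclideanSpace ℝ (Fin n)) 1)
        (lpReg p) κ (2 * (p - κ) / κ) 0 ∧ 0 < 2 * (p - κ) / κ) := by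
  constructor
  · rintro κ ⟨hk0, hkp⟩ x - l ⟨hl0, hl1⟩
    rw [smul_zero, zero_add, aux_smul p hp0 _ (by linarith), aux_zero p hp0]
    have hH := aux_nonneg p x
    have : 0 ≤ l * (1 - κ) * lpReg p x := mul_nonneg (mul_nonneg hl0 (by linarith)) hH
    simp only [mul_zero, zero_div, zero_mul, sub_zero, zero_add]
    linarith
  · rintro κ ⟨hk0, hkp⟩
    refine ⟨?_, div_pos (by linarith) hk0⟩
    rintro x hx l ⟨hl0, hl1⟩
    rw [smul_zero, zero_add, aux_smul p hp0 _ (by linarith), aux_zero p hp0, sub_zero]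
    have hx1 : ‖x‖ ≤ 1 := by simpa using hx
    have hN := aux_norm p hp0 hp1 x hx1
    have hH := aux_nonneg p x
    have hg : κ * (2 * (p - κ) / κ) / 2 = p - κ := by field_simp
    rw [hg]
    have hd : 0 ≤ l / (2 - κ) := div_nonneg hl0 (by linarith)
    have hr : 0 ≤ ‖x‖ ^ 2 := by positivity
    have a1 : 0 ≤ l * (l / (2 - κ)) * (p - κ) * ‖x‖ ^ 2 :=
      mul_nonneg (mul_nonneg (mul_nonneg hl0 hd) (by linarith)) hr
    have a2 : 0 ≤ l * (p - κ) * (lpReg p x - ‖x‖ ^ 2) :=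
      mul_nonneg (mul_nonneg hl0 (by linarith)) (by linarith)
    have a3 : 0 ≤ l * (1 - p) * lpReg p x :=
      mul_nonneg (mul_nonneg hl0 (by linarith)) hH
    linarith
end

section
/- Let h : ℝ → ℝ be given by h(x) = √|x|. Then the set of minimizers over [−2, 2] of the function x ↦ h(x) + (1/2)·(3/2 − x)² is exactly {0, 1}; that is, Prox_{h}([−2,2], 3/2) = {0, 1}. -/
open Set

lemma aux_pos (s : ℝ) :
    s + 1 / 2 * (3 / 2 - s ^ 2) ^ 2 = 9 / 8 + s / 2 * ((s - 1) ^ 2 * (s + 2)) := by ring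

lemma aux_neg (s : ℝ) :
    s + 1 / 2 * (3 / 2 - -s ^ 2) ^ 2 = 9 / 8 + (s + s ^ 4 / 2 + 3 / 2 * s ^ 2) := by ring

lemma aux_cases (x : ℝ) : ∃ s : ℝ, 0 ≤ s ∧ Real.sqrt |x| = s ∧ (x = s ^ 2 ∨ x = -s ^ 2) := by
  refine ⟨Real.sqrt |x|, Real.sqrt_nonneg _, rfl, ?_⟩
  rw [Real.sq_sqrt (abs_nonneg x)]
  rcases abs_choice x with h | h <;> rw [h] <;> simp

lemma aux_ge (x : ℝ) : 9 / 8 ≤ Real.sqrt |x| + 1 / 2 * (3 / 2 - x) ^ 2 := by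
  obtain ⟨s, hs, h, hx | hx⟩ := aux_cases x
  · rw [h, hx, aux_pos]
    have : 0 ≤ s / 2 * ((s - 1) ^ 2 * (s + 2)) := by positivity
    linarith
  · rw [h, hx, aux_neg]
    have : 0 ≤ s + s ^ 4 / 2 + 3 / 2 * s ^ 2 := by positivity
    linarith

lemma aux_eq (x : ℝ) (hle : Real.sqrt |x| + 1 / 2 * (3 / 2 - x) ^ 2 ≤ 9 / 8) :
    x = 0 ∨ x = 1 := by
  obtain ⟨s, hs, h, hx | hx⟩ := aux_cases x
  · rw [h, hx, aux_pos] at hle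
    have h1 : 0 ≤ s / 2 * ((s - 1) ^ 2 * (s + 2)) := by positivity
    have h2 : s / 2 * ((s - 1) ^ 2 * (s + 2)) = 0 := by linarith
    rcases mul_eq_zero.1 h2 with h3 | h3
    · left
      have : s = 0 := by linarith
      simp [hx, this]
    · rcases mul_eq_zero.1 h3 with h4 | h4
      · right
        have : s = 1 := by linarith [pow_eq_zero_iff (two_ne_zero) |>.1 h4]
        simp [hx, this]
      · linarith
  · rw [h, hx, aux_neg] at hle
    have h1 : 0 ≤ s ^ 4 / 2 + 3 / 2 * s ^ 2 := by positivity
    have : s = 0 := by linarith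
    left
    simp [hx, this]

theorem stmt_14 :
    {x ∈ Icc (-2 : ℝ) 2 | ∀ y ∈ Icc (-2 : ℝ) 2,
        Real.sqrt |x| + 1 / 2 * (3 / 2 - x) ^ 2 ≤ Real.sqrt |y| + 1 / 2 * (3 / 2 - y) ^ 2}
      = {0, 1} := by
  ext x
  simp only [mem_setOf_eq, mem_insert_iff, mem_singleton_iff]
  constructor
  · rintro ⟨-, h⟩
    apply aux_eq
    have := h 0 (by norm_num)
    norm_num at this ⊢
    exact this
  · rintro (rfl | rfl)
    · refine ⟨by norm_num, fun y _ => le_trans (le_of_eq ?_) (aux_ge y)⟩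
      norm_num
    · refine ⟨by norm_num, fun y _ => le_trans (le_of_eq ?_) (aux_ge y)⟩
      norm_num
end

section
/- Let K ⊆ ℝ^n be a nonempty closed convex set and let h : ℝ^n → ℝ be lower semicontinuous and (κ,γ)-strongly quasar-convex on K with respect to x̄ ∈ argmin_K h, with κ ∈ (0,1] and γ ≥ 0. Let β > 0, z ∈ ℝ^n, and x* ∈ Prox_{βh}(K, z). Then h(x*) − h(x̄) ≤ (1/(κβ))·⟨x* − z, x̄ − x*⟩ − (γ/2)·‖x* − x̄‖². -/
open Set RealInnerProductSpace

/-- The proximity operator `Prox_{βh}(K, z)` of `h` on `K` with parameter `β`. -/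
def Prox {n : ℕ} (β : ℝ) (h : EuclideanSpace ℝ (Fin n) → ℝ)
    (K : Set (EuclideanSpace ℝ (Fin n))) (z : EuclideanSpace ℝ (Fin n)) :
    Set (EuclideanSpace ℝ (Fin n)) :=
  {x ∈ K | ∀ y ∈ K, h x + 1 / (2 * β) * ‖z - x‖ ^ 2 ≤ h y + 1 / (2 * β) * ‖z - y‖ ^ 2}

theorem stmt_15 {n : ℕ} (K : Set (EuclideanSpace ℝ (Fin n)))
    (hK : K.Nonempty) (hKcl : IsClosed K) (hKcv : Convex ℝ K)
    (h : EuclideanSpace ℝ (Fin n) → ℝ) (hlsc : LowerSemicontinuous h)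
    (κ γ : ℝ) (hκ : κ ∈ Ioc (0:ℝ) 1) (hγ : 0 ≤ γ)
    (xbar : EuclideanSpace ℝ (Fin n)) (hxbarK : xbar ∈ K)
    (hxbar : ∀ x ∈ K, h xbar ≤ h x)
    (hq : StronglyQuasarConvexOn K h κ γ xbar)
    (β : ℝ) (hβ : 0 < β) (z : EuclideanSpace ℝ (Fin n))
    (xstar : EuclideanSpace ℝ (Fin n)) (hx : xstar ∈ Prox β h K z) :
    h xstar - h xbar ≤
      1 / (κ * β) * ⟪xstar - z, xbar - xstar⟫ - γ / 2 * ‖xstar - xbar‖ ^ 2 := by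
  obtain ⟨hκ0, hκ1⟩ := hκ
  obtain ⟨hxK, hmin⟩ := hx
  set N := ‖xstar - xbar‖ ^ 2 with hN
  set I := ⟪xstar - z, xbar - xstar⟫ with hI
  have hN0 : 0 ≤ N := by positivity
  have h2κ : 0 < 2 - κ := by linarith
  obtain ⟨c, hc⟩ : ∃ c, c = 1 / (2 - κ) := ⟨_, rfl⟩
  obtain ⟨b, hb⟩ : ∃ b, b = 1 / (2 * β) := ⟨_, rfl⟩
  have hc0 : 0 < c := by rw [hc]; positivity
  have hb0 : 0 < b := by rw [hb]; positivity
  have key : ∀ l : ℝ, 0 < l → l ≤ 1 →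
      κ * (h xstar - h xbar) - 2 * b * I + κ * γ / 2 * N
        ≤ l * (b * N + c * (κ * γ / 2) * N) := by
    intro l hl0 hl1
    have h1 := hq xstar hxK l ⟨hl0.le, hl1⟩
    have h2 := hmin (l • xbar + (1 - l) • xstar)
      (hKcv hxbarK hxK hl0.le (by linarith) (by ring))
    have h3 : ‖z - (l • xbar + (1 - l) • xstar)‖ ^ 2
        = ‖z - xstar‖ ^ 2 + 2 * l * I + l ^ 2 * N := by
      have e : z - (l • xbar + (1 - l) • xstar) = -((xstar - z) + l • (xbar - xstar)) := by
        module
      rw [e, norm_neg, norm_add_sq_real, inner_smul_right, norm_smul, mul_pow, hN,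
        norm_sub_rev z xstar, norm_sub_rev xstar xbar, Real.norm_eq_abs, sq_abs]
      ring
    rw [h3, ← hb] at h2
    rw [← hN, div_eq_mul_one_div l, ← hc] at h1
    refine le_of_mul_le_mul_left ?_ hl0
    nlinarith [h1, h2]
  have hB : 0 ≤ b * N + c * (κ * γ / 2) * N := by positivity
  have hA : κ * (h xstar - h xbar) - 2 * b * I + κ * γ / 2 * N ≤ 0 := by
    by_contra! hA
    generalize κ * (h xstar - h xbar) - 2 * b * I + κ * γ / 2 * N = A at *
    generalize b * N + c * (κ * γ / 2) * N = B at *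
    have hd : 0 < A + B + 1 := by linarith
    have := key (A / (A + B + 1)) (by positivity) (by rw [div_le_one hd]; linarith)
    rw [div_mul_eq_mul_div, le_div_iff₀ hd] at this
    nlinarith
  refine le_of_mul_le_mul_left ?_ hκ0
  have e : κ * (1 / (κ * β) * I - γ / 2 * N) = 2 * b * I - κ * γ / 2 * N := by
    rw [hb]; field_simp
  rw [e]
  linarith
end

section
/- Let K ⊆ ℝ^n be a nonempty closed convex set, let h : ℝ^n → ℝ be lower semicontinuous and (κ,γ)-strongly quasar-convex on K with respect to x̄ ∈ argmin_K h, with κ ∈ (0,1] and γ ≥ 0, and let β > 0. Then the set of fixed points of the proximity operator equals the set of minimizers of h on K: a point x* satisfies x* ∈ Prox_{βh}(K, x*) if and only if x* ∈ argmin_K h. -/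
open Set

theorem stmt_16 {n : ℕ} (K : Set (EuclideanSpace ℝ (Fin n)))
    (hK : K.Nonempty) (hKcl : IsClosed K) (hKcv : Convex ℝ K)
    (h : EuclideanSpace ℝ (Fin n) → ℝ) (hlsc : LowerSemicontinuous h)
    (κ γ : ℝ) (hκ : κ ∈ Ioc (0:ℝ) 1) (hγ : 0 ≤ γ)
    (xbar : EuclideanSpace ℝ (Fin n)) (hxbarK : xbar ∈ K)
    (hxbar : ∀ x ∈ K, h xbar ≤ h x)
    (hq : StronglyQuasarConvexOn K h κ γ xbar)
    (β : ℝ) (hβ : 0 < β) :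
    ∀ xstar : EuclideanSpace ℝ (Fin n),
      xstar ∈ Prox β h K xstar ↔ (xstar ∈ K ∧ ∀ y ∈ K, h xstar ≤ h y) := by
  intro x
  obtain ⟨hκ0, hκ1⟩ := hκ
  constructor
  · rintro ⟨hxK, hx⟩
    refine ⟨hxK, fun y hy => le_trans ?_ (hxbar y hy)⟩
    by_contra hlt
    push Not at hlt
    have hc : 0 < 1 / (2 * β) := by positivity
    generalize 1 / (2 * β) = c at hx hc
    have key : ∀ l : ℝ, 0 < l → l ≤ 1 →
        κ * (h x - h xbar) ≤ l * (c * ‖x - xbar‖ ^ 2) := by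
      intro l hl0 hl1
      have hyK : l • xbar + (1 - l) • x ∈ K :=
        hKcv hxbarK hxK hl0.le (by linarith) (by ring)
      have h1 := hx _ hyK
      have h2 := hq x hxK l ⟨hl0.le, hl1⟩
      have e : x - (l • xbar + (1 - l) • x) = l • (x - xbar) := by module
      rw [e, norm_smul, Real.norm_of_nonneg hl0.le, sub_self, norm_zero] at h1
      have h3 : 0 ≤ 1 - l / (2 - κ) := by
        rw [sub_nonneg, div_le_one (by linarith)]
        linarith
      have h4 : 0 ≤ l * (1 - l / (2 - κ)) * (κ * γ / 2) * ‖x - xbar‖ ^ 2 := by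
        positivity
      have h5 : l * (κ * (h x - h xbar)) ≤ l * (l * (c * ‖x - xbar‖ ^ 2)) := by
        nlinarith
      exact le_of_mul_le_mul_left h5 hl0
    have ha : 0 < κ * (h x - h xbar) := mul_pos hκ0 (by linarith)
    have hb : 0 ≤ c * ‖x - xbar‖ ^ 2 := by positivity
    generalize κ * (h x - h xbar) = a at key ha
    generalize c * ‖x - xbar‖ ^ 2 = b at key hb
    have := key (a / (a + b)) (by positivity) (by rw [div_le_one (by positivity)]; linarith)
    rw [div_mul_eq_mul_div, le_div_iff₀ (by positivity)] at this
    nlinarith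
  · rintro ⟨hxK, hx⟩
    refine ⟨hxK, fun y hy => ?_⟩
    have h1 := hx y hy
    have h2 : 0 ≤ 1 / (2 * β) * ‖x - y‖ ^ 2 := by positivity
    simp only [sub_self, norm_zero]
    linarith
end
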